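/- For every monotone nondecreasing function v : ℕ → ℝ with v(k) ≥ 0 for all k, the series ∑_{k=1}^∞ v(k)·exp(−k·v(k)) converges (the family k ↦ v(k)·exp(−k·v(k)) is summable). -/

import Mathlib

open Filter Real

theorem mul_exp_neg_mul_le_exp_one_sub_mul {c t x : ℝ} (ht : 1 ≤ t) (hcx : c ≤ x) :
    x * exp (-t * x) ≤ exp ((1 - t) * c) :=
  calc x * exp (-t * x)
      ≤ exp x * exp (-t * x) := by
        gcongr
        linarith [add_one_le_exp x]
    _ = exp ((1 - t) * x) := by rw [← exp_add]; ring_nf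
    _ ≤ exp ((1 - t) * c) :=
        exp_le_exp.mpr (mul_le_mul_of_nonpos_left hcx (sub_nonpos.mpr ht))

theorem summable_exp_one_sub_nat_mul {c : ℝ} (hc : 0 < c) :
    Summable fun k : ℕ => exp ((1 - k) * c) := by
  have hgeom : Summable fun k : ℕ => exp (k * -c) :=
    summable_exp_nat_mul_iff.mpr (neg_lt_zero.mpr hc)
  refine (hgeom.mul_left (exp c)).congr fun k => ?_
  rw [← exp_add]
  ring_nf

theorem summable_mul_exp_neg_nat_mul_of_eventually_ge {v : ℕ → ℝ} {c : ℝ} (hc : 0 < c)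
    (hv : ∀ᶠ k in atTop, c ≤ v k) :
    Summable fun k : ℕ => v k * exp (-(k : ℝ) * v k) := by
  refine (summable_exp_one_sub_nat_mul hc).of_norm_bounded_eventually_nat ?_
  filter_upwards [hv, eventually_ge_atTop 1] with k hck hk
  have hterm : 0 ≤ v k * exp (-(k : ℝ) * v k) := mul_nonneg (hc.le.trans hck) (exp_nonneg _)
  rw [norm_of_nonneg hterm]
  exact mul_exp_neg_mul_le_exp_one_sub_mul (Nat.one_le_cast.mpr hk) hck

/-- For every monotone nondecreasing function `v : ℕ → ℝ` with `v k ≥ 0` for all `k`,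
the family `k ↦ v k * exp (-k * v k)` is summable. -/
theorem summable_monotone_mul_exp_neg (v : ℕ → ℝ) (hmono : Monotone v)
    (hnonneg : ∀ k, 0 ≤ v k) :
    Summable (fun k : ℕ => v k * Real.exp (-(k : ℝ) * v k)) := by
  by_cases hzero : ∀ k, v k = 0
  · simp [hzero]
  · obtain ⟨K, hK⟩ := not_forall.mp hzero
    have hpos : 0 < v K := (hnonneg K).lt_of_ne' hK
    have hge : ∀ᶠ k in atTop, v K ≤ v k := (eventually_ge_atTop K).mono fun _ hk => hmono hk
    exact summable_mul_exp_neg_nat_mul_of_eventually_ge hpos hge
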